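/- Let v_i ∈ N be the images of the standard basis vectors, and let Z ⊂ ℂⁿ be the union of the coordinate subspaces {z : z_{i₁} = ⋯ = z_{i_r} = 0} over all subsets {i₁,…,i_r} with {v_{i₁},…,v_{i_r}} linearly dependent. Then for λ a regular value, the projection to the first factor satisfies p₁(μ^{-1}(λ)) ⊆ ℂⁿ ∖ Z; that is, if Σ_i (z_i w_i) u_i = λ with λ regular, then the vectors {v_i : z_i = 0} are linearly independent in N ⊗ ℝ. -/

import Mathlib

/-!
The coordinate functionals `u i` with `z i ≠ 0` have `λ = ∑ i, (z i * w i) • u i` in their span, so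
by regularity they span the whole dual of `V`. A vector of `V` on which all of these functionals
vanish is therefore zero. But a vector in the span of the `b i` with `z i = 0` is exactly one on
which they vanish, so this span meets `V` trivially and survives in the quotient by `V`.
-/

open Module Submodule

section MomentMap

variable {ι R M : Type*} [CommSemiring R] [AddCommMonoid M] [Module R M]

/-- The moment map `μ(z, w) = ∑ i, (z i * w i) • u i` of the torus action on the cotangent space of
the coordinate space, in terms of the weights `u i` of the torus. -/
def hypertoricMomentMap [Fintype ι] (u : ι → M) (z w : ι → R) : M :=
  ∑ i, (z i * w i) • u i

variable (R) in
/-- Regularity of `lam` for the moment map with weights `u`, in its combinatorial form: `lam` avoids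
the span of every subfamily of `u` which does not span the whole module. -/
def IsRegularMomentValue (u : ι → M) (lam : M) : Prop :=
  ∀ S : Set ι, span R (u '' S) ≠ ⊤ → lam ∉ span R (u '' S)

theorem hypertoricMomentMap_mem_span_image_support [Fintype ι] (u : ι → M) (z w : ι → R) :
    hypertoricMomentMap u z w ∈ span R (u '' z.support) := by
  refine sum_mem fun i _ => ?_
  by_cases hi : z i = 0
  · simp [hi]
  · exact smul_mem _ _ (subset_span (Set.mem_image_of_mem u hi))

theorem IsRegularMomentValue.span_image_support_eq_top [Fintype ι] {u : ι → M} {z w : ι → R}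
    (h : IsRegularMomentValue R u (hypertoricMomentMap u z w)) :
    span R (u '' z.support) = ⊤ :=
  by_contra fun hspan => h _ hspan (hypertoricMomentMap_mem_span_image_support u z w)

end MomentMap

section GaleDuality

variable {ι R M : Type*} [CommRing R] [AddCommGroup M] [Module R M]
  (b : Basis ι R M) {V : Submodule R M} {S : Set ι}

theorem eq_zero_of_span_dualRestrict_coord_eq_top
    (hS : span R ((fun i => V.dualRestrict (b.coord i)) '' S) = ⊤) {x : M} (hxV : x ∈ V)
    (hx : ∀ i ∈ S, b.coord i x = 0) : x = 0 := by
  have heval : Dual.eval R V ⟨x, hxV⟩ = 0 := LinearMap.ext_on hS (Set.forall_mem_image.2 hx)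
  exact b.forall_coord_eq_zero_iff.1 fun i => LinearMap.congr_fun heval (V.dualRestrict (b.coord i))

theorem disjoint_span_image_compl_of_span_dualRestrict_coord_eq_top
    (hS : span R ((fun i => V.dualRestrict (b.coord i)) '' S) = ⊤) :
    Disjoint (span R (b '' Sᶜ)) V := by
  rw [disjoint_def]
  intro x hx hxV
  refine eq_zero_of_span_dualRestrict_coord_eq_top b hS hxV fun i hi => ?_
  have hsupp : ↑(b.repr x).support ⊆ Sᶜ := b.mem_span_image.1 hx
  exact Finsupp.notMem_support_iff.1 fun hmem => hsupp hmem hi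

theorem linearIndepOn_compl_mkQ_of_span_dualRestrict_coord_eq_top
    (hS : span R ((fun i => V.dualRestrict (b.coord i)) '' S) = ⊤) :
    LinearIndepOn R (fun i => V.mkQ (b i)) Sᶜ := by
  refine LinearIndependent.map (f := V.mkQ) (b.linearIndependent.linearIndepOn Sᶜ) ?_
  rw [ker_mkQ, ← Set.image_eq_range]
  exact disjoint_span_image_compl_of_span_dualRestrict_coord_eq_top b hS

end GaleDuality

theorem moment_fiber_projects_to_arrangement_complement_general {ι R M : Type*} [Fintype ι]
    [CommRing R] [AddCommGroup M] [Module R M] (b : Basis ι R M) (V : Submodule R M)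
    {u : ι → Dual R V} (hu : ∀ i, u i = V.dualRestrict (b.coord i))
    {v : ι → M ⧸ V} (hv : ∀ i, v i = V.mkQ (b i))
    {lam : Dual R V} (hreg : IsRegularMomentValue R u lam)
    {z w : ι → R} (hzw : hypertoricMomentMap u z w = lam) :
    LinearIndepOn R v {i | z i = 0} := by
  obtain rfl := funext hu
  obtain rfl := funext hv
  subst hzw
  rw [← Function.compl_support]
  exact linearIndepOn_compl_mkQ_of_span_dualRestrict_coord_eq_top b hreg.span_image_support_eq_top

/-- Setup (over `ℂ`): `V' ⊆ ℂⁿ` is the subspace `N'_ℂ` of the exact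
sequence `0 → N' → ℤⁿ → N → 0`, so that `N_ℂ = ℂⁿ/V'` with `v_i` the image of `e_i`, and
dually `M'_ℂ = (V')^*` with `u_i` the restriction of `e_i^*` to `V'`.  If `λ ∈ M'_ℂ` is a
regular value (not contained in the span of any subset of `{u_1, …, u_n}` that fails to
span `M'_ℂ`) and `Σ_i (z_i w_i) u_i = λ`, then the vectors `{v_i : z_i = 0}` are linearly
independent; equivalently, the projection of the hypertoric moment-map fiber `μ⁻¹(λ)` to
the first factor lands in the complement of the coordinate subspace arrangement `Z`. -/
theorem moment_fiber_projects_to_arrangement_complement (n : ℕ)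
    (V' : Submodule ℂ (Fin n → ℂ))
    (u : Fin n → Module.Dual ℂ ↥V')
    (hu : ∀ i, u i = (LinearMap.proj i : (Fin n → ℂ) →ₗ[ℂ] ℂ).comp V'.subtype)
    (v : Fin n → (Fin n → ℂ) ⧸ V')
    (hv : ∀ i, v i = Submodule.Quotient.mk (Pi.single i 1))
    (lam : Module.Dual ℂ ↥V')
    (hreg : ∀ S : Set (Fin n), Submodule.span ℂ (u '' S) ≠ ⊤ →
      lam ∉ Submodule.span ℂ (u '' S))
    (z w : Fin n → ℂ) (hzw : ∑ i, (z i * w i) • u i = lam) :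
    LinearIndependent ℂ (fun i : {i : Fin n // z i = 0} => v i.1) := by
  refine moment_fiber_projects_to_arrangement_complement_general (Pi.basisFun ℂ (Fin n)) V'
    (fun i => ?_) (fun i => ?_) hreg hzw
  · ext x; simp [hu]
  · simp [hv]
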